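/- In the abstract hybrid-dimensional variational setting, assume additionally that A_m, A_f and each T_i are bounded above, i.e. ⟨A_m x, x⟩ ≤ λ̄‖x‖², ⟨A_f y, y⟩ ≤ λ̄‖y‖² and ⟨T_i z, z⟩ ≤ τ̄‖z‖² for some λ̄, τ̄ > 0. Then for every ξ ∈ (1/2, 1] and every bounded linear functional ℓ : V → ℝ, there exists a unique u ∈ V such that a_ξ(u, v) = ℓ(v) for all v ∈ V, and it satisfies the a priori estimate ‖u‖_V ≤ ‖ℓ‖ / min(λ̲, τ̲). -/

import Mathlib

open scoped BigOperators RealInnerProductSpace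

/-!
The jump terms on one fracture with one-sided jumps `p` and `m` regroup as
`(2ξ - 1) (⟪T p, p⟫ + ⟪T m, m⟫) + (1 - ξ) ⟪T (p + m), p + m⟫`. The last term is nonnegative for
`ξ ≤ 1` and the prefactor `(2ξ - 1)⁻¹` cancels exactly, so the form is coercive with a constant
`min lam tau` that does not degenerate as `ξ → 1/2`. Lax–Milgram gives unique solvability, and
testing the equation with its solution gives the a priori estimate.
-/

section Coercive

lemma norm_le_opNorm_div_of_mul_sq_le {V : Type*} [SeminormedAddCommGroup V] [NormedSpace ℝ V]
    {c : ℝ} (hc : 0 < c) {ℓ : V →L[ℝ] ℝ} {u : V} (h : c * ‖u‖ ^ 2 ≤ ℓ u) :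
    ‖u‖ ≤ ‖ℓ‖ / c := by
  rw [le_div_iff₀' hc]
  rcases (norm_nonneg u).eq_or_lt with hu | hu
  · simp [← hu]
  · refine le_of_mul_le_mul_right ?_ hu
    calc c * ‖u‖ * ‖u‖ = c * ‖u‖ ^ 2 := by ring
      _ ≤ ℓ u := h
      _ ≤ ‖ℓ‖ * ‖u‖ := (le_abs_self _).trans (ℓ.le_opNorm u)

variable {V : Type*} [NormedAddCommGroup V] [InnerProductSpace ℝ V] [CompleteSpace V]
  {B : V →L[ℝ] V →L[ℝ] ℝ}

lemma bijective_of_isCoercive (hB : IsCoercive B) : Function.Bijective B := by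
  have hcomp : ⇑B = InnerProductSpace.toDual ℝ V ∘ hB.continuousLinearEquivOfBilin := by
    ext u v
    exact (hB.continuousLinearEquivOfBilin_apply u v).symm
  rw [hcomp]
  exact (InnerProductSpace.toDual ℝ V).bijective.comp hB.continuousLinearEquivOfBilin.bijective

theorem exists_unique_solution_norm_le_of_coercive {c : ℝ} (hc : 0 < c)
    (hB : ∀ v, c * ‖v‖ ^ 2 ≤ B v v) (ℓ : V →L[ℝ] ℝ) :
    ∃ u, B u = ℓ ∧ ‖u‖ ≤ ‖ℓ‖ / c ∧ ∀ u', B u' = ℓ → u' = u := by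
  have hbij : Function.Bijective B :=
    bijective_of_isCoercive ⟨c, hc, fun v => by simpa only [mul_assoc, ← sq] using hB v⟩
  obtain ⟨u, rfl⟩ := hbij.surjective ℓ
  exact ⟨u, rfl, norm_le_opNorm_div_of_mul_sq_le hc (hB u), fun _ h => hbij.injective h⟩

end Coercive

section Jump

variable {E : Type*} [SeminormedAddCommGroup E] [InnerProductSpace ℝ E]
  {F : Type*} [FunLike F E E] [LinearMapClass F ℝ E E]

lemma inner_jump_coupling_eq (T : F) (ξ : ℝ) (p m : E) :
    ⟪T (ξ • p + (1 - ξ) • m), p⟫ + ⟪T (ξ • m + (1 - ξ) • p), m⟫ =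
      (2 * ξ - 1) * (⟪T p, p⟫ + ⟪T m, m⟫) + (1 - ξ) * ⟪T (p + m), p + m⟫ := by
  simp only [map_add, map_smul, inner_add_left, inner_add_right, real_inner_smul_left]
  ring

lemma le_inv_mul_inner_jump_coupling {T : F} {tau ξ : ℝ} (htau : 0 ≤ tau)
    (hT : ∀ z, tau * ‖z‖ ^ 2 ≤ ⟪T z, z⟫) (hξ : 1 / 2 < ξ) (hξ1 : ξ ≤ 1) (p m : E) :
    tau * (‖p‖ ^ 2 + ‖m‖ ^ 2) ≤
      (2 * ξ - 1)⁻¹ * (⟪T (ξ • p + (1 - ξ) • m), p⟫ + ⟪T (ξ • m + (1 - ξ) • p), m⟫) := by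
  have hpos : 0 < 2 * ξ - 1 := by linarith
  have hsum : 0 ≤ ⟪T (p + m), p + m⟫ := le_trans (by positivity) (hT (p + m))
  rw [le_inv_mul_iff₀ hpos, inner_jump_coupling_eq]
  calc (2 * ξ - 1) * (tau * (‖p‖ ^ 2 + ‖m‖ ^ 2))
      ≤ (2 * ξ - 1) * (⟪T p, p⟫ + ⟪T m, m⟫) :=
        mul_le_mul_of_nonneg_left (by linarith [hT p, hT m]) hpos.le
    _ ≤ (2 * ξ - 1) * (⟪T p, p⟫ + ⟪T m, m⟫) + (1 - ξ) * ⟪T (p + m), p + m⟫ :=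
        le_add_of_nonneg_right (mul_nonneg (sub_nonneg.2 hξ1) hsum)

end Jump

section HybridForm

variable {V : Type*} [SeminormedAddCommGroup V] [NormedSpace ℝ V]

/-- The bounded bilinear form `(u, v) ↦ ⟪L u, M v⟫` of two operators into the same inner product
space; every term of `a_ξ` has this shape. -/
noncomputable def innerForm {E : Type*} [SeminormedAddCommGroup E] [InnerProductSpace ℝ E]
    (L M : V →L[ℝ] E) : V →L[ℝ] V →L[ℝ] ℝ :=
  ContinuousLinearMap.bilinearComp (innerSL ℝ : E →L[ℝ] E →L[ℝ] ℝ) L M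

@[simp]
lemma innerForm_apply {E : Type*} [SeminormedAddCommGroup E] [InnerProductSpace ℝ E]
    (L M : V →L[ℝ] E) (u v : V) : innerForm L M u v = ⟪L u, M v⟫ :=
  rfl

variable {Hm Hf : Type*} [SeminormedAddCommGroup Hm] [InnerProductSpace ℝ Hm]
  [SeminormedAddCommGroup Hf] [InnerProductSpace ℝ Hf]
  {ι : Type*} [Fintype ι]
  {K : ι → Type*} [∀ i, SeminormedAddCommGroup (K i)] [∀ i, InnerProductSpace ℝ (K i)]
  (Gm : V →L[ℝ] Hm) (Gf : V →L[ℝ] Hf) (Jp Jm : ∀ i, V →L[ℝ] K i)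
  (Am : Hm →L[ℝ] Hm) (Af : Hf →L[ℝ] Hf) (T : ∀ i, K i →L[ℝ] K i) (ξ : ℝ)

/-- The form `a_ξ` of the hybrid-dimensional model as a bounded bilinear form on `V`: matrix and
fracture diffusion plus, on each fracture `i`, the coupling of the one-sided jumps `Jp i`, `Jm i`.
At `ξ = 1 / 2` the coupling vanishes because `0⁻¹ = 0`. -/
noncomputable def hybridForm : V →L[ℝ] V →L[ℝ] ℝ :=
  innerForm (Am ∘L Gm) Gm + innerForm (Af ∘L Gf) Gf +
    (2 * ξ - 1)⁻¹ • ∑ i,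
      (innerForm (T i ∘L (ξ • Jp i + (1 - ξ) • Jm i)) (Jp i) +
        innerForm (T i ∘L (ξ • Jm i + (1 - ξ) • Jp i)) (Jm i))

lemma hybridForm_apply (u v : V) :
    hybridForm Gm Gf Jp Jm Am Af T ξ u v =
      ⟪Am (Gm u), Gm v⟫ + ⟪Af (Gf u), Gf v⟫ +
      (2 * ξ - 1)⁻¹ * ∑ i,
        (⟪T i (ξ • Jp i u + (1 - ξ) • Jm i u), Jp i v⟫ +
         ⟪T i (ξ • Jm i u + (1 - ξ) • Jp i u), Jm i v⟫) := by
  simp [hybridForm]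

variable {Gm Gf Jp Jm Am Af T ξ}

lemma hybridForm_coercive {lam tau : ℝ} (hlam : 0 ≤ lam) (htau : 0 ≤ tau)
    (hnorm : ∀ v, ‖v‖ ^ 2 ≤ ‖Gm v‖ ^ 2 + ‖Gf v‖ ^ 2 + ∑ i, (‖Jp i v‖ ^ 2 + ‖Jm i v‖ ^ 2))
    (hAm : ∀ x, lam * ‖x‖ ^ 2 ≤ ⟪Am x, x⟫) (hAf : ∀ y, lam * ‖y‖ ^ 2 ≤ ⟪Af y, y⟫)
    (hT : ∀ i z, tau * ‖z‖ ^ 2 ≤ ⟪T i z, z⟫) (hξ : 1 / 2 < ξ) (hξ1 : ξ ≤ 1) (v : V) :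
    min lam tau * ‖v‖ ^ 2 ≤ hybridForm Gm Gf Jp Jm Am Af T ξ v v := by
  have hjump (i : ι) := le_inv_mul_inner_jump_coupling htau (hT i) hξ hξ1 (Jp i v) (Jm i v)
  rw [hybridForm_apply, Finset.mul_sum]
  calc min lam tau * ‖v‖ ^ 2
      ≤ min lam tau *
          (‖Gm v‖ ^ 2 + ‖Gf v‖ ^ 2 + ∑ i, (‖Jp i v‖ ^ 2 + ‖Jm i v‖ ^ 2)) :=
        mul_le_mul_of_nonneg_left (hnorm v) (le_min hlam htau)
    _ = min lam tau * ‖Gm v‖ ^ 2 + min lam tau * ‖Gf v‖ ^ 2 +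
          ∑ i, min lam tau * (‖Jp i v‖ ^ 2 + ‖Jm i v‖ ^ 2) := by
        rw [mul_add, mul_add, Finset.mul_sum]
    _ ≤ lam * ‖Gm v‖ ^ 2 + lam * ‖Gf v‖ ^ 2 + ∑ i, tau * (‖Jp i v‖ ^ 2 + ‖Jm i v‖ ^ 2) := by
        gcongr <;> simp only [min_le_left, min_le_right]
    _ ≤ _ := add_le_add (add_le_add (hAm _) (hAf _)) (Finset.sum_le_sum fun i _ => hjump i)

end HybridForm

theorem stmt_9_general
    {V Hm Hf : Type*}
    [NormedAddCommGroup V] [InnerProductSpace ℝ V] [CompleteSpace V]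
    [SeminormedAddCommGroup Hm] [InnerProductSpace ℝ Hm]
    [SeminormedAddCommGroup Hf] [InnerProductSpace ℝ Hf]
    {ι : Type*} [Fintype ι]
    {K : ι → Type*} [∀ i, SeminormedAddCommGroup (K i)] [∀ i, InnerProductSpace ℝ (K i)]
    (Gm : V →L[ℝ] Hm) (Gf : V →L[ℝ] Hf)
    (Jp Jm : ∀ i, V →L[ℝ] K i)
    (hnorm : ∀ v : V, ‖v‖ ^ 2 ≤
      ‖Gm v‖ ^ 2 + ‖Gf v‖ ^ 2 + ∑ i, (‖Jp i v‖ ^ 2 + ‖Jm i v‖ ^ 2))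
    (Am : Hm →L[ℝ] Hm) (Af : Hf →L[ℝ] Hf) (T : ∀ i, K i →L[ℝ] K i)
    (lam tau : ℝ) (hlam : 0 < lam) (htau : 0 < tau)
    (hAm : ∀ x : Hm, lam * ‖x‖ ^ 2 ≤ ⟪Am x, x⟫)
    (hAf : ∀ y : Hf, lam * ‖y‖ ^ 2 ≤ ⟪Af y, y⟫)
    (hT : ∀ i, ∀ z : K i, tau * ‖z‖ ^ 2 ≤ ⟪T i z, z⟫)
    (ξ : ℝ) (hξ : 1 / 2 < ξ) (hξ1 : ξ ≤ 1)
    (a : V → V → ℝ)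
    (ha : ∀ u v : V, a u v =
      ⟪Am (Gm u), Gm v⟫ + ⟪Af (Gf u), Gf v⟫ +
      (2 * ξ - 1)⁻¹ * ∑ i,
        (⟪T i (ξ • Jp i u + (1 - ξ) • Jm i u), Jp i v⟫ +
         ⟪T i (ξ • Jm i u + (1 - ξ) • Jp i u), Jm i v⟫))
    (ℓ : V →L[ℝ] ℝ) :
    ∃ u : V, (∀ v : V, a u v = ℓ v) ∧ ‖u‖ ≤ ‖ℓ‖ / min lam tau ∧
      ∀ u' : V, (∀ v : V, a u' v = ℓ v) → u' = u := by
  have hmin : 0 < min lam tau := lt_min hlam htau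
  have hsolves (u : V) :
      (∀ v, a u v = ℓ v) ↔ hybridForm Gm Gf Jp Jm Am Af T ξ u = ℓ := by
    simp only [ha, ContinuousLinearMap.ext_iff, hybridForm_apply]
  simpa only [hsolves] using exists_unique_solution_norm_le_of_coercive hmin
    (hybridForm_coercive hlam.le htau.le hnorm hAm hAf hT hξ hξ1) ℓ

/-- Abstract hybrid-dimensional variational setting with two-sided bounds on the
permeability/transmissibility operators: for every `ξ ∈ (1/2, 1]` and every
bounded linear functional `ℓ`, there is a unique `u ∈ V` with
`a_ξ(u, ·) = ℓ`, and it satisfies `‖u‖ ≤ ‖ℓ‖ / min(λ̲, τ̲)`. -/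
theorem stmt_9
    {V Hm Hf : Type*}
    [NormedAddCommGroup V] [InnerProductSpace ℝ V] [CompleteSpace V]
    [NormedAddCommGroup Hm] [InnerProductSpace ℝ Hm]
    [NormedAddCommGroup Hf] [InnerProductSpace ℝ Hf]
    {ι : Type*} [Fintype ι]
    {K : ι → Type*} [∀ i, NormedAddCommGroup (K i)] [∀ i, InnerProductSpace ℝ (K i)]
    (Gm : V →L[ℝ] Hm) (Gf : V →L[ℝ] Hf)
    (Jp Jm : ∀ i, V →L[ℝ] K i)
    (hnorm : ∀ v : V, ‖v‖ ^ 2 =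
      ‖Gm v‖ ^ 2 + ‖Gf v‖ ^ 2 + ∑ i, (‖Jp i v‖ ^ 2 + ‖Jm i v‖ ^ 2))
    (Am : Hm →L[ℝ] Hm) (Af : Hf →L[ℝ] Hf) (T : ∀ i, K i →L[ℝ] K i)
    (hAmsym : ∀ x y : Hm, ⟪Am x, y⟫ = ⟪x, Am y⟫)
    (hAfsym : ∀ x y : Hf, ⟪Af x, y⟫ = ⟪x, Af y⟫)
    (hTsym : ∀ i, ∀ x y : K i, ⟪T i x, y⟫ = ⟪x, T i y⟫)
    (lam tau lamUp tauUp : ℝ) (hlam : 0 < lam) (htau : 0 < tau)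
    (hlamUp : 0 < lamUp) (htauUp : 0 < tauUp)
    (hAm : ∀ x : Hm, lam * ‖x‖ ^ 2 ≤ ⟪Am x, x⟫)
    (hAf : ∀ y : Hf, lam * ‖y‖ ^ 2 ≤ ⟪Af y, y⟫)
    (hT : ∀ i, ∀ z : K i, tau * ‖z‖ ^ 2 ≤ ⟪T i z, z⟫)
    (hAmUp : ∀ x : Hm, ⟪Am x, x⟫ ≤ lamUp * ‖x‖ ^ 2)
    (hAfUp : ∀ y : Hf, ⟪Af y, y⟫ ≤ lamUp * ‖y‖ ^ 2)
    (hTUp : ∀ i, ∀ z : K i, ⟪T i z, z⟫ ≤ tauUp * ‖z‖ ^ 2)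
    (ξ : ℝ) (hξ : 1 / 2 < ξ) (hξ1 : ξ ≤ 1)
    (a : V → V → ℝ)
    (ha : ∀ u v : V, a u v =
      ⟪Am (Gm u), Gm v⟫ + ⟪Af (Gf u), Gf v⟫ +
      (2 * ξ - 1)⁻¹ * ∑ i,
        (⟪T i (ξ • Jp i u + (1 - ξ) • Jm i u), Jp i v⟫ +
         ⟪T i (ξ • Jm i u + (1 - ξ) • Jp i u), Jm i v⟫))
    (ℓ : V →L[ℝ] ℝ) :
    ∃ u : V, (∀ v : V, a u v = ℓ v) ∧ ‖u‖ ≤ ‖ℓ‖ / min lam tau ∧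
      ∀ u' : V, (∀ v : V, a u' v = ℓ v) → u' = u :=
  stmt_9_general Gm Gf Jp Jm (fun v => (hnorm v).le) Am Af T lam tau hlam htau hAm hAf hT
    ξ hξ hξ1 a ha ℓ
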